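/- arXiv:2008.07780 — 2 statements merged into one kernel-verified Lean document; each statement's English description precedes it below -/
import Mathlib

section
/- Let m ≥ 2, d ≥ 1, z₁ ∈ ℝ, and let G be a positive definite Hermitian md×md complex matrix. Then G·M_d is not Hermitian. (In particular, if the Gram matrix of the generating singular elements is used as the Gram matrix of the A-model, the resulting minimal operator of the A-model fails to be symmetric.) -/
open Matrix ComplexOrder

/-- The `m × m` matrix `M = z₁·I + N`, where `N` is the upper-shift matrix. -/
noncomputable def shiftM (m : ℕ) (z₁ : ℝ) : Matrix (Fin m) (Fin m) ℂ :=
  Matrix.of fun j j' : Fin m =>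
    (if j = j' then (z₁ : ℂ) else 0) + (if (j' : ℕ) = (j : ℕ) + 1 then 1 else 0)

/-- The `md × md` block-diagonal matrix consisting of `d` copies of `M`. -/
noncomputable def Md (m d : ℕ) (z₁ : ℝ) :
    Matrix (Fin d × Fin m) (Fin d × Fin m) ℂ :=
  Matrix.of fun p q : Fin d × Fin m =>
    if p.1 = q.1 then shiftM m z₁ p.2 q.2 else 0

/-- If `m ≥ 2`, `d ≥ 1` and `G` is a positive definite (Hermitian) `md × md` matrix,
then `G·M_d` is not Hermitian. -/
theorem not_isHermitian_mul_Md_of_posDef (m d : ℕ) (hm : 2 ≤ m) (hd : 1 ≤ d) (z₁ : ℝ)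
    (G : Matrix (Fin d × Fin m) (Fin d × Fin m) ℂ) (hG : G.PosDef) :
    ¬ (G * Md m d z₁).IsHermitian := by
  intro h
  let a : Fin d × Fin m := (⟨0, hd⟩, ⟨0, by omega⟩)
  let b : Fin d × Fin m := (⟨0, hd⟩, ⟨1, by omega⟩)
  have ha : ∀ p, Md m d z₁ p a = if p = a then (z₁ : ℂ) else 0 := by
    rintro ⟨p, q⟩
    simp only [Md, shiftM, a, Matrix.of_apply, Prod.mk.injEq]
    by_cases h1 : p = ⟨0, hd⟩ <;> simp [h1]
  have hb : ∀ p, Md m d z₁ p b = (if p = b then (z₁ : ℂ) else 0) + (if p = a then 1 else 0) := by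
    rintro ⟨p, q⟩
    simp only [Md, shiftM, a, b, Matrix.of_apply, Prod.mk.injEq]
    by_cases h1 : p = ⟨0, hd⟩ <;> simp [h1, Fin.ext_iff, eq_comm]
  have e1 : (G * Md m d z₁) b a = G b a * z₁ := by
    simp [Matrix.mul_apply, ha]
  have e2 : (G * Md m d z₁) a b = G a b * z₁ + G a a := by
    simp [Matrix.mul_apply, hb, mul_add, Finset.sum_add_distrib]
  have h3 := h.apply a b
  have h4 := hG.isHermitian.apply a b
  rw [e1, e2, star_mul', h4] at h3
  have h5 : G a a = 0 := by simpa using h3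
  have h6 := hG.diag_pos (i := a)
  rw [h5] at h6
  exact lt_irrefl _ h6
end

section
/- Let m ≥ 2, d ≥ 1, z₁ ∈ ℝ, and let G be an invertible Hermitian md×md complex matrix satisfying condition (A2). Then for every c ∈ ℂ^d, the vector x := (G^{-1}·(G·M_d)^* − M_d)·η(c) ∈ ℂ^{md} satisfies (G·x)_{(σ,m)} = 0 for every σ ∈ {1,…,d}. -/
open Matrix

/-- The embedding `η : ℂ^d → ℂ^{md}`, `(η c)_{(σ,j)} = c_σ` if `j` is the last index
(1-based index `m`) and `0` otherwise. -/
def eta (m d : ℕ) (c : Fin d → ℂ) : Fin d × Fin m → ℂ :=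
  fun p => if (p.2 : ℕ) + 1 = m then c p.1 else 0

/-- Condition (A2): `G_{(σ,m−1),(σ',m)} = G_{(σ,m),(σ',m−1)}` for all `σ, σ'`. -/
def A2 (m d : ℕ) (hm : 2 ≤ m)
    (G : Matrix (Fin d × Fin m) (Fin d × Fin m) ℂ) : Prop :=
  ∀ σ σ' : Fin d,
    G (σ, ⟨m - 2, by omega⟩) (σ', ⟨m - 1, by omega⟩) =
      G (σ, ⟨m - 1, by omega⟩) (σ', ⟨m - 2, by omega⟩)

theorem mul_Md_last (m d : ℕ) (hm : 2 ≤ m) (z₁ : ℝ)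
    (G : Matrix (Fin d × Fin m) (Fin d × Fin m) ℂ) (p : Fin d × Fin m) (τ : Fin d) :
    (G * Md m d z₁) p (τ, ⟨m - 1, by omega⟩) =
      G p (τ, ⟨m - 1, by omega⟩) * z₁ + G p (τ, ⟨m - 2, by omega⟩) := by
  have key : ∀ q : Fin d × Fin m, G p q * Md m d z₁ q (τ, ⟨m - 1, by omega⟩) =
      (if q = (τ, ⟨m - 1, by omega⟩) then G p q * z₁ else 0) +
      (if q = (τ, ⟨m - 2, by omega⟩) then G p q else 0) := by
    rintro ⟨a, j⟩
    have h2 : (m - 1 = (j : ℕ) + 1) ↔ (j : ℕ) = m - 2 := by omega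
    by_cases ha : a = τ
    · simp [Md, shiftM, ha, Fin.ext_iff, h2, mul_add]
    · simp [Md, ha]
  rw [Matrix.mul_apply, Finset.sum_congr rfl (fun q _ => key q), Finset.sum_add_distrib]
  simp

/-- If `G` is an invertible Hermitian `md × md` matrix satisfying (A2), then for every
`c ∈ ℂ^d` the vector `x = (G⁻¹·(G·M_d)^* − M_d)·η(c)` satisfies `(G·x)_{(σ,m)} = 0`. -/
theorem defect_vector_in_orthogonal_complement (m d : ℕ) (hm : 2 ≤ m) (hd : 1 ≤ d) (z₁ : ℝ)
    (G : Matrix (Fin d × Fin m) (Fin d × Fin m) ℂ) (hG : G.IsHermitian)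
    (hGinv : IsUnit G.det) (hA2 : A2 m d hm G) (c : Fin d → ℂ) (σ : Fin d) :
    G.mulVec ((G⁻¹ * (G * Md m d z₁)ᴴ - Md m d z₁).mulVec (eta m d c))
        (σ, ⟨m - 1, by omega⟩) = 0 := by
  rw [Matrix.mulVec_mulVec, Matrix.mul_sub, ← Matrix.mul_assoc, Matrix.mul_nonsing_inv G hGinv,
    Matrix.one_mul]
  unfold Matrix.mulVec dotProduct
  refine Finset.sum_eq_zero ?_
  rintro ⟨τ, j⟩ -
  by_cases hj : (j : ℕ) + 1 = m
  · have hj' : j = ⟨m - 1, by clear hj; omega⟩ := Fin.ext (by simp; omega)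
    rw [hj']
    beta_reduce
    rw [Matrix.sub_apply, Matrix.conjTranspose_apply, mul_Md_last m d hm, mul_Md_last m d hm,
      star_add, star_mul', hG.apply, hG.apply, hA2 σ τ]
    simp
  · simp [eta, hj]
end
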